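/- Let q ∈ ℂ with 0 < |q| < 1, let A : ℤ → ℂ be any sequence, and let x ∈ ℂ with x ≠ -q^{-m} for every m ∈ ℕ (so that (-x;q)_j ≠ 0 for all j). Assume the families (i,j) ↦ A_{i-j} q^{j(j-1)/2} x^j / ((q;q)_i (q;q)_j) and (i,j) ↦ A_{i-j} q^{j(j-1)/2 + ij} x^j / ((q;q)_i (q;q)_j (-x;q)_j), both indexed by ℕ×ℕ, are absolutely summable. Then ∑_{i,j≥0} A_{i-j} q^{j(j-1)/2} x^j / ((q;q)_i (q;q)_j) = (-x;q)_∞ · ∑_{i,j≥0} A_{i-j} q^{j(j-1)/2 + ij} x^j / ((q;q)_i (q;q)_j (-x;q)_j). -/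

import Mathlib

/-- The finite q-shifted factorial `(a;q)_n = ∏_{k=0}^{n-1} (1 - a q^k)`. -/
noncomputable def qPoch (a q : ℂ) (n : ℕ) : ℂ := ∏ k ∈ Finset.range n, (1 - a * q ^ k)

/-- The infinite q-shifted factorial `(a;q)_∞ = ∏_{k=0}^{∞} (1 - a q^k)`. -/
noncomputable def qPochInf (a q : ℂ) : ℂ := ∏' k : ℕ, (1 - a * q ^ k)

/-!
By Euler's identity `(-y;q)_∞ = ∑_k q^{k(k-1)/2} y^k / (q;q)_k`, the quotient
`(-x;q)_∞ / (-x;q)_j = (-x q^j;q)_∞` is a power series in `x q^j`, so the right-hand side becomes an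
absolutely convergent triple series over `(i, j, k)`. The substitution
`(m, n) = (i + k, j + k)` does not change `A_{i-j}`, and for fixed `(m, n)` the sum over `k` is
evaluated by the finite `q`-Vandermonde identity
`∑_k q^{(m-k)(n-k)} / ((q;q)_{m-k} (q;q)_{n-k} (q;q)_k) = 1 / ((q;q)_m (q;q)_n)`.
-/

open Finset Filter Topology

section FiniteIdentities

variable {q : ℂ}

lemma qPoch_self_succ (q : ℂ) (n : ℕ) : qPoch q q (n + 1) = qPoch q q n * (1 - q ^ (n + 1)) := by
  rw [qPoch, prod_range_succ, ← pow_succ', ← qPoch]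

lemma qPoch_self_ne_zero (hq : ‖q‖ < 1) (n : ℕ) : qPoch q q n ≠ 0 := by
  refine prod_ne_zero_iff.mpr fun k _ h ↦ ?_
  have h_lt : ‖q * q ^ k‖ < 1 := by
    rw [← pow_succ', norm_pow]
    exact pow_lt_one₀ (norm_nonneg q) hq k.succ_ne_zero
  rw [← sub_eq_zero.mp h, norm_one] at h_lt
  exact lt_irrefl 1 h_lt

lemma one_sub_pow_succ_ne_zero (hq : ∀ n, qPoch q q n ≠ 0) (n : ℕ) : 1 - q ^ (n + 1) ≠ 0 :=
  right_ne_zero_of_mul (qPoch_self_succ q n ▸ hq (n + 1))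

lemma qPoch_neg_ne_zero {x : ℂ} (hq : q ≠ 0) (hx : ∀ m : ℕ, x ≠ -q ^ (-(m : ℤ))) (n : ℕ) :
    qPoch (-x) q n ≠ 0 := by
  refine prod_ne_zero_iff.mpr fun m _ h ↦ hx m ?_
  rw [zpow_neg, zpow_natCast]
  field_simp
  linear_combination h

lemma choose_two_add (m n : ℕ) : (m + n).choose 2 = m.choose 2 + n.choose 2 + m * n := by
  rw [Nat.add_choose_eq, Nat.sum_antidiagonal_eq_sum_range_succ_mk]
  simp only [sum_range_succ, range_zero, sum_empty, Nat.choose_zero_right, Nat.choose_one_right,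
    Nat.sub_zero, Nat.add_one_sub_one, Nat.sub_self]
  ring

lemma sum_antidiagonal_pow_div_qPoch (hq : ∀ n, qPoch q q n ≠ 0) (m d : ℕ) :
    ∑ p ∈ antidiagonal m,
        q ^ (p.1 * (p.1 + d)) / (qPoch q q p.1 * qPoch q q (p.1 + d) * qPoch q q p.2) =
      1 / (qPoch q q m * qPoch q q (m + d)) := by
  have h_one_sub := one_sub_pow_succ_ne_zero hq
  induction m generalizing d with
  | zero => simp [qPoch]
  | succ m ih =>
    set f : ℕ × ℕ → ℂ := fun p ↦
      q ^ (p.1 * (p.1 + d)) / (qPoch q q p.1 * qPoch q q (p.1 + d) * qPoch q q p.2)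
    have h_split : ∀ p ∈ antidiagonal (m + 1),
        (1 - q ^ (m + 1)) * f p = (1 - q ^ p.1) * f p + q ^ p.1 * (1 - q ^ p.2) * f p := by
      intro p hp
      rw [← mem_antidiagonal.mp hp]
      ring
    have h_merge (a b : ℕ) :
        (1 - q ^ (a + 1)) * f (a + 1, b) + q ^ a * (1 - q ^ (b + 1)) * f (a, b + 1) =
          q ^ (a * (a + (d + 1))) /
            (qPoch q q a * qPoch q q (a + (d + 1)) * qPoch q q b) := by
      have h_shift : a + 1 + d = a + d + 1 := by ring
      simp only [f, h_shift, ← add_assoc, qPoch_self_succ]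
      field_simp [hq, h_one_sub]
      ring
    apply mul_left_cancel₀ (h_one_sub m)
    calc (1 - q ^ (m + 1)) * ∑ p ∈ antidiagonal (m + 1), f p
        = ∑ p ∈ antidiagonal m, ((1 - q ^ (p.1 + 1)) * f (p.1 + 1, p.2) +
            q ^ p.1 * (1 - q ^ (p.2 + 1)) * f (p.1, p.2 + 1)) := by
          rw [mul_sum, sum_congr rfl h_split, sum_add_distrib, Nat.sum_antidiagonal_succ,
            Nat.sum_antidiagonal_succ']
          simp only [pow_zero, sub_self, zero_mul, zero_add, mul_zero, sum_add_distrib]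
      _ = 1 / (qPoch q q m * qPoch q q (m + (d + 1))) := by
          simp only [h_merge, ih]
      _ = (1 - q ^ (m + 1)) * (1 / (qPoch q q (m + 1) * qPoch q q (m + 1 + d))) := by
          rw [qPoch_self_succ q m, add_right_comm m 1 d, ← add_assoc]
          field_simp [hq, h_one_sub]

lemma sum_range_min_pow_div_qPoch (hq : ∀ n, qPoch q q n ≠ 0) (m n : ℕ) :
    ∑ k ∈ range (min m n + 1),
        q ^ ((m - k) * (n - k)) / (qPoch q q (m - k) * qPoch q q (n - k) * qPoch q q k) =
      1 / (qPoch q q m * qPoch q q n) := by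
  wlog hmn : m ≤ n generalizing m n
  · simpa only [min_comm, mul_comm] using this n m (le_of_not_ge hmn)
  obtain ⟨d, rfl⟩ := Nat.exists_eq_add_of_le hmn
  rw [min_eq_left hmn, ← sum_antidiagonal_pow_div_qPoch hq, ← Nat.sum_antidiagonal_swap,
    Nat.sum_antidiagonal_eq_sum_range_succ_mk]
  refine sum_congr rfl fun k hk ↦ ?_
  have h_sub : m + d - k = m - k + d := by have := mem_range.mp hk; omega
  simp only [Prod.swap, h_sub]

end FiniteIdentities

section QExponential

variable {q : ℂ}

/-- The `k`-th term `q^{k(k-1)/2} y^k / (q;q)_k` of the series of Jackson's `q`-exponential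
`E_q(y)`, whose sum is the infinite product `(-y;q)_∞`. -/
noncomputable def qExpTerm (q y : ℂ) (k : ℕ) : ℂ := q ^ k.choose 2 * y ^ k / qPoch q q k

@[simp]
lemma qExpTerm_zero_right (q y : ℂ) : qExpTerm q y 0 = 1 := by
  simp [qExpTerm, qPoch]

lemma qExpTerm_succ (q y : ℂ) (k : ℕ) :
    qExpTerm q y (k + 1) = q ^ k * y / (1 - q ^ (k + 1)) * qExpTerm q y k := by
  rw [qExpTerm, qExpTerm, qPoch_self_succ, choose_two_add]
  simp only [Nat.choose_eq_zero_of_lt one_lt_two, mul_one, add_zero, div_eq_mul_inv, mul_inv]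
  ring

lemma qExpTerm_mul_right (q y z : ℂ) (k : ℕ) : qExpTerm q (y * z) k = z ^ k * qExpTerm q y k := by
  simp only [qExpTerm]
  ring

lemma summable_qExpTerm (hq : ‖q‖ < 1) (y : ℂ) : Summable (qExpTerm q y) := by
  have h_pow : Tendsto (fun k : ℕ ↦ q ^ k) atTop (𝓝 0) :=
    tendsto_pow_atTop_nhds_zero_of_norm_lt_one hq
  have h_ratio : Tendsto (fun k : ℕ ↦ ‖q ^ k * y / (1 - q ^ (k + 1))‖) atTop (𝓝 0) := by
    simpa using ((h_pow.mul_const y).div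
      (((tendsto_add_atTop_iff_nat 1).mpr h_pow).const_sub 1) (by simp)).norm
  refine summable_of_ratio_norm_eventually_le one_half_lt_one ?_
  filter_upwards [h_ratio.eventually_le_const one_half_pos] with k hk
  rw [qExpTerm_succ, norm_mul]
  gcongr

lemma norm_qExpTerm_mul_pow_le (hq : ‖q‖ < 1) (y : ℂ) (n k : ℕ) :
    ‖qExpTerm q (y * q ^ n) k‖ ≤ ‖qExpTerm q y k‖ := by
  rw [qExpTerm_mul_right, norm_mul, norm_pow, norm_pow]
  exact mul_le_of_le_one_left (norm_nonneg _)
    (pow_le_one₀ (by positivity) (pow_le_one₀ (norm_nonneg q) hq.le))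

lemma tsum_qExpTerm_eq_one_add_mul (hq : ‖q‖ < 1) (y : ℂ) :
    ∑' k, qExpTerm q y k = (1 + y) * ∑' k, qExpTerm q (y * q) k := by
  have h_succ (k : ℕ) :
      qExpTerm q y (k + 1) = qExpTerm q (y * q) (k + 1) + y * qExpTerm q (y * q) k := by
    have h_one_sub := one_sub_pow_succ_ne_zero (qPoch_self_ne_zero hq) k
    simp only [qExpTerm_mul_right, qExpTerm_succ]
    field_simp
    ring
  have h_summable := summable_qExpTerm hq (y * q)
  rw [(summable_qExpTerm hq y).tsum_eq_zero_add, tsum_congr h_succ,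
    ((summable_nat_add_iff 1).mpr h_summable).tsum_add (h_summable.mul_left y), tsum_mul_left,
    add_mul, one_mul, h_summable.tsum_eq_zero_add]
  simp only [qExpTerm_zero_right]
  ring

lemma tsum_qExpTerm_eq_qPoch_mul (hq : ‖q‖ < 1) (y : ℂ) (n : ℕ) :
    ∑' k, qExpTerm q y k = qPoch (-y) q n * ∑' k, qExpTerm q (y * q ^ n) k := by
  induction n with
  | zero => simp [qPoch]
  | succ n ih =>
    rw [ih, tsum_qExpTerm_eq_one_add_mul hq, qPoch, qPoch, prod_range_succ, pow_succ]
    ring_nf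

lemma tendsto_tsum_qExpTerm_mul_pow (hq : ‖q‖ < 1) (y : ℂ) :
    Tendsto (fun n : ℕ ↦ ∑' k, qExpTerm q (y * q ^ n) k) atTop (𝓝 1) := by
  have h_tsum_zero : ∑' k, qExpTerm q 0 k = 1 := by
    rw [tsum_eq_single 0 fun k hk ↦ by simp [qExpTerm, hk], qExpTerm_zero_right]
  rw [← h_tsum_zero]
  refine tendsto_tsum_of_dominated_convergence (summable_qExpTerm hq y).norm (fun k ↦ ?_)
    (.of_forall fun n k ↦ norm_qExpTerm_mul_pow_le hq y n k)
  have h_arg : Tendsto (fun n : ℕ ↦ y * q ^ n) atTop (𝓝 0) := by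
    simpa using (tendsto_pow_atTop_nhds_zero_of_norm_lt_one hq).const_mul y
  have h_cont : Continuous fun z ↦ qExpTerm q z k := by unfold qExpTerm; fun_prop
  exact (h_cont.tendsto 0).comp h_arg

lemma tendsto_qPoch (hq : ‖q‖ < 1) (a : ℂ) : Tendsto (qPoch a q) atTop (𝓝 (qPochInf a q)) := by
  have h_summable : Summable fun k : ℕ ↦ ‖-(a * q ^ k)‖ := by
    simpa only [norm_neg, norm_mul, norm_pow] using
      (summable_geometric_of_lt_one (norm_nonneg q) hq).mul_left ‖a‖
  have h_multipliable : Multipliable fun k : ℕ ↦ 1 - a * q ^ k := by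
    simpa only [← sub_eq_add_neg] using multipliable_one_add_of_summable h_summable
  exact h_multipliable.hasProd.tendsto_prod_nat

theorem tsum_qExpTerm (hq : ‖q‖ < 1) (y : ℂ) : ∑' k, qExpTerm q y k = qPochInf (-y) q := by
  have h_lim := (tendsto_qPoch hq (-y)).mul (tendsto_tsum_qExpTerm_mul_pow hq y)
  simp only [← tsum_qExpTerm_eq_qPoch_mul hq, mul_one] at h_lim
  exact tendsto_nhds_unique tendsto_const_nhds h_lim

end QExponential

section DoubleSeries

lemma tsum_eq_tsum_sum_range_min {E : Type*} [AddCommGroup E] [UniformSpace E]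
    [IsUniformAddGroup E] [CompleteSpace E] [T2Space E] {f : (ℕ × ℕ) × ℕ → E} (hf : Summable f) :
    ∑' t, f t = ∑' p : ℕ × ℕ, ∑ k ∈ range (min p.1 p.2 + 1), f ((p.1 - k, p.2 - k), k) := by
  let g : (ℕ × ℕ) × ℕ → ℕ × ℕ := fun t ↦ (t.1.1 + t.2, t.1.2 + t.2)
  have h_fiber (p : ℕ × ℕ) : g ⁻¹' {p} =
      (range (min p.1 p.2 + 1)).image (fun k ↦ ((p.1 - k, p.2 - k), k)) := by
    ext ⟨⟨i, j⟩, k⟩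
    simp only [g, Set.mem_preimage, Set.mem_singleton_iff, coe_image, Set.mem_image, mem_coe,
      mem_range, Prod.ext_iff]
    constructor
    · rintro ⟨hi, hj⟩
      exact ⟨k, by omega, by omega, rfl⟩
    · rintro ⟨l, hl, ⟨hi, hj⟩, rfl⟩
      omega
  rw [← (hf.hasSum.tsum_fiberwise g).tsum_eq]
  refine tsum_congr fun p ↦ ?_
  rw [h_fiber, tsum_subtype', sum_image fun k _ l _ h ↦ congrArg Prod.snd h]

/-- The summand of the triple series obtained from the right-hand side of the transformation by
expanding `(-x;q)_∞ / (-x;q)_j = (-x q^j;q)_∞`; the index `((i, j), k)` has `(i, j)` from the double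
series and `k` from the `q`-exponential. -/
noncomputable def tripleTerm (A : ℤ → ℂ) (q x : ℂ) (t : (ℕ × ℕ) × ℕ) : ℂ :=
  A ((t.1.1 : ℤ) - t.1.2) * q ^ (t.1.2.choose 2 + t.1.1 * t.1.2) * x ^ t.1.2 /
    (qPoch q q t.1.1 * qPoch q q t.1.2) * qExpTerm q (x * q ^ t.1.2) t.2

variable {q x : ℂ} {A : ℤ → ℂ}

lemma tripleTerm_eq_mul (hx : ∀ n, qPoch (-x) q n ≠ 0) (p : ℕ × ℕ) (k : ℕ) :
    tripleTerm A q x (p, k) =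
      A ((p.1 : ℤ) - p.2) * q ^ (p.2 * (p.2 - 1) / 2 + p.1 * p.2) * x ^ p.2 /
        (qPoch q q p.1 * qPoch q q p.2 * qPoch (-x) q p.2) *
        (qPoch (-x) q p.2 * qExpTerm q (x * q ^ p.2) k) := by
  rw [tripleTerm, Nat.choose_two_right, ← div_div _ _ (qPoch (-x) q p.2), ← mul_assoc,
    div_mul_cancel₀ _ (hx p.2)]

lemma summable_tripleTerm (hq : ‖q‖ < 1) (hx : ∀ n, qPoch (-x) q n ≠ 0)
    (hA : Summable fun p : ℕ × ℕ ↦ ‖A ((p.1 : ℤ) - p.2) *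
      q ^ (p.2 * (p.2 - 1) / 2 + p.1 * p.2) * x ^ p.2 /
      (qPoch q q p.1 * qPoch q q p.2 * qPoch (-x) q p.2)‖) :
    Summable (tripleTerm A q x) := by
  obtain ⟨C, hC⟩ := (Metric.isBounded_range_of_tendsto _ (tendsto_qPoch hq (-x))).exists_norm_le
  have h_bound := (hA.mul_of_nonneg (summable_qExpTerm hq x).norm (fun _ ↦ norm_nonneg _)
    fun _ ↦ norm_nonneg _).mul_left C
  refine .of_norm_bounded h_bound fun ⟨p, k⟩ ↦ ?_
  rw [tripleTerm_eq_mul hx, norm_mul, norm_mul (qPoch _ _ _), mul_left_comm C]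
  have h_qPoch : ‖qPoch (-x) q p.2‖ ≤ C := hC _ ⟨p.2, rfl⟩
  have hC_nonneg : 0 ≤ C := (norm_nonneg _).trans h_qPoch
  have h_qExp := norm_qExpTerm_mul_pow_le hq x p.2 k
  gcongr

lemma tsum_tripleTerm (hq : ‖q‖ < 1) (hx : ∀ n, qPoch (-x) q n ≠ 0) (p : ℕ × ℕ) :
    ∑' k, tripleTerm A q x (p, k) =
      qPochInf (-x) q * (A ((p.1 : ℤ) - p.2) * q ^ (p.2 * (p.2 - 1) / 2 + p.1 * p.2) * x ^ p.2 /
        (qPoch q q p.1 * qPoch q q p.2 * qPoch (-x) q p.2)) := by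
  simp only [tripleTerm_eq_mul hx, tsum_mul_left]
  rw [← tsum_qExpTerm_eq_qPoch_mul hq, tsum_qExpTerm hq, mul_comm]

lemma tripleTerm_sub (A : ℤ → ℂ) (q x : ℂ) {m n k : ℕ} (hk : k ≤ min m n) :
    tripleTerm A q x ((m - k, n - k), k) =
      A ((m : ℤ) - n) * q ^ n.choose 2 * x ^ n *
        (q ^ ((m - k) * (n - k)) / (qPoch q q (m - k) * qPoch q q (n - k) * qPoch q q k)) := by
  obtain ⟨i, rfl⟩ := Nat.exists_eq_add_of_le' (le_min_iff.mp hk).1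
  obtain ⟨j, rfl⟩ := Nat.exists_eq_add_of_le' (le_min_iff.mp hk).2
  have h_diff : ((i + k : ℕ) : ℤ) - (j + k : ℕ) = i - j := by push_cast; ring
  simp only [tripleTerm, qExpTerm, Nat.add_sub_cancel, h_diff, choose_two_add, div_eq_mul_inv,
    mul_inv]
  ring

lemma sum_range_min_tripleTerm (hq : ∀ n, qPoch q q n ≠ 0) (p : ℕ × ℕ) :
    ∑ k ∈ range (min p.1 p.2 + 1), tripleTerm A q x ((p.1 - k, p.2 - k), k) =
      A ((p.1 : ℤ) - p.2) * q ^ (p.2 * (p.2 - 1) / 2) * x ^ p.2 /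
        (qPoch q q p.1 * qPoch q q p.2) := by
  rw [sum_congr rfl fun k hk ↦ tripleTerm_sub A q x (mem_range_succ_iff.mp hk), ← mul_sum,
    sum_range_min_pow_div_qPoch hq, mul_one_div, Nat.choose_two_right]

end DoubleSeries

theorem stmt1 (q : ℂ) (hq0 : 0 < ‖q‖) (hq1 : ‖q‖ < 1)
    (A : ℤ → ℂ) (x : ℂ)
    (hx : ∀ m : ℕ, x ≠ -q ^ (-(m : ℤ)))
    (h1 : Summable (fun p : ℕ × ℕ => ‖A ((p.1 : ℤ) - (p.2 : ℤ)) *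
      q ^ (p.2 * (p.2 - 1) / 2) * x ^ p.2 / (qPoch q q p.1 * qPoch q q p.2)‖))
    (h2 : Summable (fun p : ℕ × ℕ => ‖A ((p.1 : ℤ) - (p.2 : ℤ)) *
      q ^ (p.2 * (p.2 - 1) / 2 + p.1 * p.2) * x ^ p.2 /
      (qPoch q q p.1 * qPoch q q p.2 * qPoch (-x) q p.2)‖)) :
    ∑' p : ℕ × ℕ, A ((p.1 : ℤ) - (p.2 : ℤ)) *
      q ^ (p.2 * (p.2 - 1) / 2) * x ^ p.2 / (qPoch q q p.1 * qPoch q q p.2)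
    = qPochInf (-x) q * ∑' p : ℕ × ℕ, A ((p.1 : ℤ) - (p.2 : ℤ)) *
      q ^ (p.2 * (p.2 - 1) / 2 + p.1 * p.2) * x ^ p.2 /
      (qPoch q q p.1 * qPoch q q p.2 * qPoch (-x) q p.2) := by
  have h_qPoch : ∀ n, qPoch (-x) q n ≠ 0 := qPoch_neg_ne_zero (norm_pos_iff.mp hq0) hx
  have h_summable : Summable (tripleTerm A q x) := summable_tripleTerm hq1 h_qPoch h2
  calc _ = ∑' p : ℕ × ℕ, ∑ k ∈ range (min p.1 p.2 + 1),
          tripleTerm A q x ((p.1 - k, p.2 - k), k) :=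
        (tsum_congr (sum_range_min_tripleTerm (qPoch_self_ne_zero hq1))).symm
    _ = ∑' t, tripleTerm A q x t := (tsum_eq_tsum_sum_range_min h_summable).symm
    _ = ∑' p : ℕ × ℕ, ∑' k, tripleTerm A q x (p, k) := h_summable.tsum_prod
    _ = _ := by rw [tsum_congr (tsum_tripleTerm hq1 h_qPoch), tsum_mul_left]
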